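/- Let Φ be an irreducible reduced root system and λ a dominant weight that is not minuscule. Then there exists an irreducible subset I of the simple-root index set such that λ − θ_I is a dominant weight, where θ_I is the highest short root of the subsystem Φ_I (with the G₂ exception where one may also use α₁+α₂). Consequently λ covers some dominant weight. -/

import Mathlib

open scoped RealInnerProductSpace

noncomputable section

variable {E : Type*} [NormedAddCommGroup E] [InnerProductSpace ℝ E]

/-- The pairing `⟨x, α∨⟩ = 2(x,α)/(α,α)`. -/
def cpair (x α : E) : ℝ := 2 * ⟪x, α⟫ / ⟪α, α⟫

/-- Reflection in the hyperplane orthogonal to `α`. -/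
def wrefl (α x : E) : E := x - cpair x α • α

/-- An irreducible reduced root system with a chosen base `simple : Fin ℓ → E`. -/
structure RootSystemData (ℓ : ℕ) (E : Type*) [NormedAddCommGroup E]
    [InnerProductSpace ℝ E] where
  roots : Finset E
  simple : Fin ℓ → E
  simple_mem : ∀ i, simple i ∈ roots
  root_ne_zero : ∀ α ∈ roots, α ≠ 0
  reduced : ∀ α ∈ roots, (2 : ℝ) • α ∉ roots
  cpair_int : ∀ α ∈ roots, ∀ β ∈ roots, ∃ n : ℤ, cpair β α = (n : ℝ)
  reflect_mem : ∀ α ∈ roots, ∀ β ∈ roots, wrefl α β ∈ roots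
  simple_indep : LinearIndependent ℝ simple
  root_decomp : ∀ α ∈ roots,
    (∃ c : Fin ℓ → ℕ, α = ∑ i, (c i : ℝ) • simple i) ∨
    (∃ c : Fin ℓ → ℕ, α = -∑ i, (c i : ℝ) • simple i)
  irred : ∀ S : Finset (Fin ℓ), S.Nonempty →
    (∀ i ∈ S, ∀ j ∉ S, ⟪simple i, simple j⟫ = 0) → S = Finset.univ

namespace RootSystemData

variable {ℓ : ℕ} (R : RootSystemData ℓ E)

/-- Integral weights. -/
def IsIntegral (x : E) : Prop := ∀ α ∈ R.roots, ∃ n : ℤ, cpair x α = (n : ℝ)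

/-- Dominant (integral) weights. -/
def IsDominant (x : E) : Prop :=
  R.IsIntegral x ∧ ∀ i, 0 ≤ cpair x (R.simple i)

/-- The dominant order: `R.wle μ λ` means `μ ≤ λ`, i.e. `λ - μ` is a nonnegative
integer combination of the simple roots. -/
def wle (μ lam : E) : Prop :=
  ∃ c : Fin ℓ → ℕ, lam - μ = ∑ i, (c i : ℝ) • R.simple i

/-- Minuscule weights: nonzero dominant weights all of whose pairings with roots
lie in `{0, 1, -1}`. -/
def IsMinuscule (x : E) : Prop :=
  R.IsDominant x ∧ x ≠ 0 ∧
  ∀ α ∈ R.roots, cpair x α = 0 ∨ cpair x α = 1 ∨ cpair x α = -1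

/-- `y` lies in the Weyl group orbit of `x`. -/
def InWeylOrbit (x y : E) : Prop :=
  ∃ l : List E, (∀ α ∈ l, α ∈ R.roots) ∧ y = l.foldr wrefl x

/-- `R.IsDualOf μ λ` expresses `μ = -w₀ λ`: `μ` is the dominant element of the
Weyl orbit of `-λ`. -/
def IsDualOf (μ lam : E) : Prop := R.IsDominant μ ∧ R.InWeylOrbit (-lam) μ

/-- Low triples of dominant weights. -/
def LowTriple (lam mu nu : E) : Prop :=
  R.IsDominant lam ∧ R.IsDominant mu ∧ R.IsDominant nu ∧
  (∀ lam' mu' : E, R.IsDominant lam' → R.IsDominant mu' →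
    R.wle lam' lam → R.wle mu' mu → R.wle nu (lam' + mu') → lam' = lam ∧ mu' = mu) ∧
  R.wle (nu + ∑ i, R.simple i) (lam + mu)

/-- Covering relation in the poset of dominant weights. -/
def Covers (lam mu : E) : Prop :=
  R.IsDominant lam ∧ R.IsDominant mu ∧ R.wle mu lam ∧ mu ≠ lam ∧
  ∀ η, R.IsDominant η → R.wle mu η → R.wle η lam → η = mu ∨ η = lam

/-- A root of the subsystem `Φ_I` generated by the simple roots indexed by `I`. -/
def IsRootOf (I : Finset (Fin ℓ)) (β : E) : Prop :=
  β ∈ R.roots ∧ ∃ c : Fin ℓ → ℤ, (∀ i, c i ≠ 0 → i ∈ I) ∧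
    β = ∑ i, (c i : ℝ) • R.simple i

/-- A short root of `Φ_I`. -/
def IsShortRootOf (I : Finset (Fin ℓ)) (β : E) : Prop :=
  R.IsRootOf I β ∧ ∀ γ, R.IsRootOf I γ → ⟪β, β⟫ ≤ ⟪γ, γ⟫

/-- `θ` is the highest short root of `Φ_I`. -/
def IsHighestShortRoot (I : Finset (Fin ℓ)) (θ : E) : Prop :=
  R.IsShortRootOf I θ ∧ ∀ γ, R.IsShortRootOf I γ → R.wle γ θ

/-- `I` indexes a connected (i.e. irreducible) subdiagram of the Dynkin diagram. -/
def Connected (I : Finset (Fin ℓ)) : Prop :=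
  I.Nonempty ∧ ∀ S ⊆ I, S.Nonempty →
    (∀ i ∈ S, ∀ j ∈ I, j ∉ S → ⟪R.simple i, R.simple j⟫ = 0) → S = I

/-- `I` is of type A: the Cartan matrix of `Φ_I` is that of a type `A` chain. -/
def IsTypeASub (I : Finset (Fin ℓ)) : Prop :=
  ∃ e : Fin I.card ≃ {i // i ∈ I}, ∀ a b : Fin I.card,
    cpair (R.simple (e b).1) (R.simple (e a).1) =
      if a = b then 2
      else if (a : ℕ) + 1 = (b : ℕ) ∨ (b : ℕ) + 1 = (a : ℕ) then -1 else 0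

/-- The subdiagram indexed by `I` is simply laced. -/
def SimplyLaced (I : Finset (Fin ℓ)) : Prop :=
  ∀ i ∈ I, ∀ j ∈ I, i ≠ j →
    cpair (R.simple i) (R.simple j) = 0 ∨ cpair (R.simple i) (R.simple j) = -1

end RootSystemData

namespace RootSystemData

variable {ℓ : ℕ} (R : RootSystemData ℓ E)

variable {R} in
theorem inner_self_pos {α : E} (hα : α ∈ R.roots) : 0 < ⟪α, α⟫ :=
  real_inner_self_pos.2 (R.root_ne_zero α hα)

variable {R} in
theorem cpair_mul_inner_self {α : E} (hα : α ∈ R.roots) (x : E) :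
    cpair x α * ⟪α, α⟫ = 2 * ⟪x, α⟫ :=
  div_mul_cancel₀ _ (inner_self_pos hα).ne'

theorem isDominant_iff (x : E) :
    R.IsDominant x ↔ R.IsIntegral x ∧ ∀ i, 0 ≤ ⟪x, R.simple i⟫ := by
  refine and_congr_right fun _ => forall_congr' fun i => ?_
  have h := inner_self_pos (R.simple_mem i)
  have h2 := cpair_mul_inner_self (R.simple_mem i) x
  constructor <;> intro h3 <;> by_contra! h4 <;> nlinarith

/-- The real linear combination of the simple roots with the given coefficients. -/
def comb (x : Fin ℓ → ℝ) : E := ∑ i, x i • R.simple i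

theorem comb_add (x y : Fin ℓ → ℝ) : R.comb (x + y) = R.comb x + R.comb y := by
  simp [comb, add_smul, Finset.sum_add_distrib]

theorem comb_sub (x y : Fin ℓ → ℝ) : R.comb (x - y) = R.comb x - R.comb y := by
  simp [comb, sub_smul, Finset.sum_sub_distrib]

theorem comb_neg (x : Fin ℓ → ℝ) : R.comb (-x) = -R.comb x := by
  simp [comb]

theorem comb_single (i : Fin ℓ) (t : ℝ) : R.comb (Pi.single i t) = t • R.simple i := by
  simp [comb, Pi.single_apply]

theorem comb_injective : Function.Injective R.comb := by
  intro x y h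
  have h0 : R.comb (x - y) = 0 := by rw [comb_sub, h, sub_self]
  funext i
  exact sub_eq_zero.1 (Fintype.linearIndependent_iff.1 R.simple_indep _ h0 i)

theorem inner_comb_left (x : Fin ℓ → ℝ) (v : E) :
    ⟪R.comb x, v⟫ = ∑ i, x i * ⟪R.simple i, v⟫ := by
  simp [comb, sum_inner, real_inner_smul_left]

/-- The natural number combination of the simple roots with the given coefficients. -/
def ncomb (c : Fin ℓ → ℕ) : E := R.comb fun i => (c i : ℝ)

theorem ncomb_injective : Function.Injective R.ncomb := by
  intro c d h
  funext i
  exact_mod_cast congrFun (R.comb_injective h) i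

theorem ncomb_add (c d : Fin ℓ → ℕ) : R.ncomb (c + d) = R.ncomb c + R.ncomb d := by
  rw [ncomb, ncomb, ncomb, ← comb_add]
  congr 1
  funext i
  simp

theorem ncomb_single (i : Fin ℓ) : R.ncomb (Pi.single i 1) = R.simple i := by
  have h : (fun j => ((Pi.single i 1 : Fin ℓ → ℕ) j : ℝ)) = Pi.single i 1 := by
    funext j
    by_cases h : j = i <;> simp [h]
  rw [ncomb, h, comb_single, one_smul]

theorem inner_ncomb_left (c : Fin ℓ → ℕ) (v : E) :
    ⟪R.ncomb c, v⟫ = ∑ i, (c i : ℝ) * ⟪R.simple i, v⟫ :=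
  R.inner_comb_left _ v

theorem wle_iff (μ lam : E) : R.wle μ lam ↔ ∃ c : Fin ℓ → ℕ, lam - μ = R.ncomb c :=
  Iff.rfl

theorem ncomb_eq_zero_iff (c : Fin ℓ → ℕ) : R.ncomb c = 0 ↔ c = 0 := by
  have h : R.ncomb 0 = 0 := by simp [ncomb, comb]
  rw [← h]
  exact R.ncomb_injective.eq_iff

variable {R} in
theorem neg_mem {α : E} (hα : α ∈ R.roots) : -α ∈ R.roots := by
  have h := R.reflect_mem α hα α hα
  have h2 : cpair α α = 2 := by
    have := inner_self_pos hα
    rw [cpair]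
    field_simp
  rw [wrefl, h2, two_smul] at h
  simpa using h

theorem exists_eq_ncomb_or_neg {α : E} (hα : α ∈ R.roots) :
    ∃ c, α = R.ncomb c ∨ α = -R.ncomb c := by
  rcases R.root_decomp α hα with ⟨c, h⟩ | ⟨c, h⟩
  exacts [⟨c, .inl h⟩, ⟨c, .inr h⟩]

theorem exists_nat_of_comb_mem {x : Fin ℓ → ℝ} (hx : R.comb x ∈ R.roots) {i : Fin ℓ}
    (hi : 0 < x i) : ∃ c : Fin ℓ → ℕ, x = fun j => (c j : ℝ) := by
  obtain ⟨c, h | h⟩ := R.exists_eq_ncomb_or_neg hx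
  · exact ⟨c, R.comb_injective h⟩
  · rw [ncomb, ← comb_neg] at h
    have := congrFun (R.comb_injective h) i
    simp only [Pi.neg_apply] at this
    have h0 : (0 : ℝ) ≤ c i := Nat.cast_nonneg _
    linarith

theorem inner_simple_nonpos {i j : Fin ℓ} (hij : i ≠ j) :
    ⟪R.simple i, R.simple j⟫ ≤ 0 := by
  by_contra! h
  have hm := R.reflect_mem _ (R.simple_mem j) _ (R.simple_mem i)
  have hp := cpair_mul_inner_self (R.simple_mem j) (R.simple i)
  have hj := inner_self_pos (R.simple_mem j)
  set p := cpair (R.simple i) (R.simple j) with hpdef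
  have hp0 : 0 < p := by by_contra! h0; nlinarith
  have e : wrefl (R.simple j) (R.simple i) = R.comb (Pi.single i 1 - Pi.single j p) := by
    rw [comb_sub, comb_single, comb_single, one_smul, wrefl]
  rw [e] at hm
  obtain ⟨c, hc⟩ := R.exists_nat_of_comb_mem hm (i := i) (by simp [hij])
  have := congrFun hc j
  simp [hij.symm] at this
  have h0 : (0 : ℝ) ≤ c j := Nat.cast_nonneg _
  linarith

theorem inner_ncomb_nonpos {c : Fin ℓ → ℕ} {j : Fin ℓ} (hj : c j = 0) :
    ⟪R.ncomb c, R.simple j⟫ ≤ 0 := by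
  rw [inner_ncomb_left]
  refine Finset.sum_nonpos fun i _ => ?_
  by_cases h : i = j
  · simp [h, hj]
  · exact mul_nonpos_of_nonneg_of_nonpos (Nat.cast_nonneg _) (R.inner_simple_nonpos h)

variable {R} in
theorem cpair_eq_one {α β : E} (hα : α ∈ R.roots) (hβ : β ∈ R.roots)
    (hle : ⟪β, β⟫ ≤ ⟪α, α⟫) (hne : β ≠ α) (hpos : 0 < ⟪β, α⟫) : cpair β α = 1 := by
  obtain ⟨n, hn⟩ := R.cpair_int α hα β hβ
  have h := cpair_mul_inner_self hα β
  have hα0 := inner_self_pos hα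
  rw [hn] at h ⊢
  have h1 : 0 < n := by
    by_contra! h0
    have : (n : ℝ) ≤ 0 := by exact_mod_cast h0
    nlinarith
  have h2 : n < 2 := by
    by_contra! h0
    have : (2 : ℝ) ≤ n := by exact_mod_cast h0
    refine hne (sub_eq_zero.1 (by_contra fun h0 => ?_))
    have h3 := real_inner_self_pos.2 h0
    rw [real_inner_sub_sub_self] at h3
    nlinarith
  have : n = 1 := by omega
  simp [this]

variable {R} in
theorem cpair_eq_neg_one {α β : E} (hα : α ∈ R.roots) (hβ : β ∈ R.roots)
    (hle : ⟪β, β⟫ ≤ ⟪α, α⟫) (hne : β ≠ -α) (hneg : ⟪β, α⟫ < 0) : cpair β α = -1 := by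
  have h := cpair_eq_one hα (neg_mem hβ) (by simpa using hle)
    (fun h => hne (by rw [← h, neg_neg])) (by rw [inner_neg_left]; linarith)
  rw [cpair, inner_neg_left] at h
  rw [cpair, ← h]
  ring

variable {R} in
theorem inner_wrefl_self {α : E} (hα : α ∈ R.roots) (β : E) :
    ⟪wrefl α β, wrefl α β⟫ = ⟪β, β⟫ := by
  have h := cpair_mul_inner_self hα β
  rw [wrefl, real_inner_sub_sub_self, real_inner_smul_right, real_inner_smul_left,
    real_inner_smul_right]
  linear_combination cpair β α * h

theorem exists_pos_of_ne_simple {c : Fin ℓ → ℕ} (hc : R.ncomb c ∈ R.roots) {i : Fin ℓ}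
    (hne : R.ncomb c ≠ R.simple i) : ∃ m, m ≠ i ∧ 0 < c m := by
  by_contra! h
  have hs : c = Pi.single i (c i) := by
    funext m
    by_cases hm : m = i
    · subst hm; simp
    · simpa [hm] using h m hm
  have e : R.ncomb c = (c i : ℝ) • R.simple i := by
    rw [← comb_single, ncomb]
    congr 1
    funext m
    rw [hs]
    by_cases hm : m = i <;> simp [hm]
  have h0 : c i ≠ 0 := fun h0 => R.root_ne_zero _ hc (by simp [e, h0])
  have h1 : c i ≠ 1 := fun h1 => hne (by simp [e, h1])
  have h2 : c i ≠ 2 := fun h2 => R.reduced _ (R.simple_mem i) (by rw [e, h2] at hc; exact_mod_cast hc)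
  obtain ⟨n, hn⟩ := R.cpair_int _ hc _ (R.simple_mem i)
  have hi := inner_self_pos (R.simple_mem i)
  have hm := cpair_mul_inner_self hc (R.simple i)
  rw [hn, e, real_inner_smul_left, real_inner_smul_right] at hm
  have hci : (0 : ℝ) < c i := by exact_mod_cast Nat.pos_of_ne_zero h0
  have h3 : (n : ℝ) * c i = 2 := by
    apply mul_right_cancel₀ (mul_pos hci hi).ne'
    linarith
  have h4 : n * (c i : ℤ) = 2 := by exact_mod_cast h3
  have h5 : (c i) ∣ 2 := by
    have : (c i : ℤ) ∣ 2 := ⟨n, by rw [← h4, mul_comm]⟩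
    exact_mod_cast this
  have := Nat.le_of_dvd (by norm_num) h5
  omega

theorem exists_ncomb_sub_smul {c : Fin ℓ → ℕ} (hc : R.ncomb c ∈ R.roots) {i : Fin ℓ}
    (hne : R.ncomb c ≠ R.simple i) {t : ℝ} (ht : 0 < t)
    (hm : R.ncomb c - t • R.simple i ∈ R.roots) :
    ∃ d : Fin ℓ → ℕ, R.ncomb d = R.ncomb c - t • R.simple i ∧ d ≤ c ∧
      ∑ m, d m < ∑ m, c m := by
  obtain ⟨m, hmi, hcm⟩ := R.exists_pos_of_ne_simple hc hne
  rw [← comb_single, ncomb, ← comb_sub] at hm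
  obtain ⟨d, hd⟩ := R.exists_nat_of_comb_mem hm (i := m) (by simpa [hmi] using hcm)
  have hd' : ∀ j, (c j : ℝ) - (Pi.single i t : Fin ℓ → ℝ) j = d j := fun j => congrFun hd j
  have hi : d i < c i := by
    have := hd' i
    simp only [Pi.single_eq_same] at this
    have h : (d i : ℝ) < c i := by linarith
    exact_mod_cast h
  have hle : d ≤ c := by
    intro j
    by_cases hj : j = i
    · subst hj; exact hi.le
    · have := hd' j
      simp only [ne_eq, hj, not_false_eq_true, Pi.single_eq_of_ne, sub_zero, Nat.cast_inj] at this
      exact this.ge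
  refine ⟨d, ?_, hle, Finset.sum_lt_sum (fun j _ => hle j) ⟨i, Finset.mem_univ _, hi⟩⟩
  rw [← comb_single, ncomb, ncomb, ← comb_sub, hd]

theorem isIntegral_add {x y : E} (hx : R.IsIntegral x) (hy : R.IsIntegral y) :
    R.IsIntegral (x + y) := by
  intro α hα
  obtain ⟨m, hm⟩ := hx α hα
  obtain ⟨n, hn⟩ := hy α hα
  refine ⟨m + n, ?_⟩
  rw [Int.cast_add, ← hm, ← hn, cpair, cpair, cpair, inner_add_left]
  ring

theorem isIntegral_neg {x : E} (hx : R.IsIntegral x) : R.IsIntegral (-x) := by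
  intro α hα
  obtain ⟨m, hm⟩ := hx α hα
  refine ⟨-m, ?_⟩
  rw [Int.cast_neg, ← hm, cpair, cpair, inner_neg_left]
  ring

theorem isIntegral_ncomb (c : Fin ℓ → ℕ) : R.IsIntegral (R.ncomb c) := by
  intro α hα
  choose n hn using fun i => R.cpair_int α hα _ (R.simple_mem i)
  refine ⟨∑ i, (c i : ℤ) * n i, ?_⟩
  push_cast
  simp only [← hn, cpair]
  rw [inner_ncomb_left, Finset.mul_sum, Finset.sum_div]
  exact Finset.sum_congr rfl fun i _ => by ring

theorem exists_isDominant_sub {lam : E} (hdom : R.IsDominant lam) {c : Fin ℓ → ℕ}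
    (hc : R.ncomb c ∈ R.roots) (h2 : 2 ≤ cpair lam (R.ncomb c)) :
    ∃ d, d ≠ 0 ∧ R.IsDominant (lam - R.ncomb d) := by
  induction hs : ∑ m, c m using Nat.strong_induction_on generalizing c with
  | _ n ih =>
  subst hs
  by_cases hd : ∀ i, 0 ≤ ⟪lam - R.ncomb c, R.simple i⟫
  · refine ⟨c, fun h0 => R.root_ne_zero _ hc ((R.ncomb_eq_zero_iff c).2 h0), ?_⟩
    rw [isDominant_iff, sub_eq_add_neg]
    exact ⟨R.isIntegral_add hdom.1 (R.isIntegral_neg (R.isIntegral_ncomb c)),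
      by simpa [sub_eq_add_neg] using hd⟩
  push Not at hd
  obtain ⟨i, hi⟩ := hd
  rw [inner_sub_left, sub_neg] at hi
  have hsi := R.simple_mem i
  have hN := inner_self_pos hsi
  have hG := inner_self_pos hc
  have hl := ((R.isDominant_iff lam).1 hdom).2 i
  have h2' := cpair_mul_inner_self hc lam
  have hlg : ⟪R.ncomb c, R.ncomb c⟫ ≤ ⟪lam, R.ncomb c⟫ := by nlinarith
  have hne : R.ncomb c ≠ R.simple i := by
    intro h
    rw [h] at hi hlg
    linarith
  have key : ∀ t : ℝ, 0 < t → R.ncomb c - t • R.simple i ∈ R.roots →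
      2 ≤ cpair lam (R.ncomb c - t • R.simple i) →
      ∃ d, d ≠ 0 ∧ R.IsDominant (lam - R.ncomb d) := by
    intro t ht hm h2t
    obtain ⟨d, hd, -, hlt⟩ := R.exists_ncomb_sub_smul hc hne ht hm
    rw [← hd] at hm h2t
    exact ih _ hlt hm h2t rfl
  obtain ⟨p, hp⟩ := R.cpair_int _ hsi _ hc
  obtain ⟨l, hl'⟩ := hdom.1 _ hsi
  have hpm := cpair_mul_inner_self hsi (R.ncomb c)
  have hlm := cpair_mul_inner_self hsi lam
  rcases hl.eq_or_lt with hl0 | hl0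
  · have hp0 : 0 < cpair (R.ncomb c) (R.simple i) := by by_contra! h0; nlinarith
    have hm := R.reflect_mem _ hsi _ hc
    have hn := inner_wrefl_self hsi (R.ncomb c)
    refine key _ hp0 hm ?_
    rw [wrefl] at hn
    rw [cpair, hn, inner_sub_right, real_inner_smul_right, ← hl0, mul_zero, sub_zero]
    exact h2
  · rw [hp] at hpm
    rw [hl'] at hlm
    have hl1 : 0 < l := by
      by_contra! h0
      have : (l : ℝ) ≤ 0 := by exact_mod_cast h0
      nlinarith
    have hlp : l < p := by
      by_contra! h0
      have : (p : ℝ) ≤ l := by exact_mod_cast h0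
      nlinarith
    have hp2 : (2 : ℝ) ≤ p := by exact_mod_cast (by omega : 2 ≤ p)
    have hg : ⟪R.simple i, R.simple i⟫ ≤ ⟪R.ncomb c, R.simple i⟫ := by nlinarith
    have hss := real_inner_sub_sub_self (R.ncomb c) (R.simple i)
    have hss0 := real_inner_self_nonneg (x := R.ncomb c - R.simple i)
    have hcomm := real_inner_comm (R.ncomb c) (R.simple i)
    have hq := cpair_eq_one hc hsi (by linarith) hne.symm (by linarith)
    have hqm := cpair_mul_inner_self hc (R.simple i)
    rw [hq] at hqm
    have hm := neg_mem (R.reflect_mem _ hc _ hsi)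
    rw [wrefl, hq, one_smul, neg_sub] at hm
    refine key 1 one_pos (by simpa using hm) ?_
    have hpos := inner_self_pos hm
    rw [one_smul, cpair, le_div_iff₀ hpos, hss, inner_sub_right]
    linarith

theorem exists_isDominant_lt {lam : E} (hdom : R.IsDominant lam) (hne : lam ≠ 0)
    (hnm : ¬ R.IsMinuscule lam) : ∃ d, d ≠ 0 ∧ R.IsDominant (lam - R.ncomb d) := by
  have h : ∃ α ∈ R.roots, ¬ (cpair lam α = 0 ∨ cpair lam α = 1 ∨ cpair lam α = -1) := by
    by_contra! h
    exact hnm ⟨hdom, hne, h⟩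
  obtain ⟨α, hα, h⟩ := h
  have key : ∃ c, R.ncomb c ∈ R.roots ∧
      ¬ (cpair lam (R.ncomb c) = 0 ∨ cpair lam (R.ncomb c) = 1 ∨
        cpair lam (R.ncomb c) = -1) := by
    obtain ⟨c, rfl | rfl⟩ := R.exists_eq_ncomb_or_neg hα
    · exact ⟨c, hα, h⟩
    · refine ⟨c, by simpa using neg_mem hα, ?_⟩
      have e : cpair lam (-R.ncomb c) = -cpair lam (R.ncomb c) := by
        simp [cpair, neg_div]
      rw [e, neg_eq_zero, neg_inj] at h
      contrapose h
      rcases h with h | h | h <;> simp [h]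
  obtain ⟨c, hc, h⟩ := key
  refine R.exists_isDominant_sub hdom hc ?_
  have h0 : 0 ≤ ⟪R.ncomb c, lam⟫ := by
    rw [inner_ncomb_left]
    refine Finset.sum_nonneg fun i _ => mul_nonneg (Nat.cast_nonneg _) ?_
    rw [real_inner_comm]
    exact ((R.isDominant_iff lam).1 hdom).2 i
  rw [real_inner_comm] at h0
  have h1 : 0 ≤ cpair lam (R.ncomb c) :=
    div_nonneg (by linarith) (inner_self_pos hc).le
  obtain ⟨n, hn⟩ := hdom.1 _ hc
  rw [hn] at h h1 ⊢
  norm_cast at *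
  have : 0 ≤ n := by exact_mod_cast h1
  omega

/-- `b` has minimal height among the nonzero natural number combinations of simple roots whose
subtraction from `lam` gives a dominant weight. -/
def IsMinimalDrop (lam : E) (b : Fin ℓ → ℕ) : Prop :=
  b ≠ 0 ∧ R.IsDominant (lam - R.ncomb b) ∧
    ∀ d, d ≠ 0 → R.IsDominant (lam - R.ncomb d) → ∑ i, b i ≤ ∑ i, d i

theorem exists_isMinimalDrop {lam : E}
    (h : ∃ d, d ≠ 0 ∧ R.IsDominant (lam - R.ncomb d)) : ∃ b, R.IsMinimalDrop lam b := by
  obtain ⟨b, ⟨hb0, hb⟩, hmin⟩ := exists_minimalFor_of_wellFoundedLT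
    (fun d : Fin ℓ → ℕ => d ≠ 0 ∧ R.IsDominant (lam - R.ncomb d)) (fun d => ∑ i, d i) h
  refine ⟨b, hb0, hb, fun d hd0 hd => ?_⟩
  rcases le_total (∑ i, b i) (∑ i, d i) with h | h
  · exact h
  · exact hmin ⟨hd0, hd⟩ h

variable {R} in
theorem IsMinimalDrop.covers {lam : E} (hdom : R.IsDominant lam) {b : Fin ℓ → ℕ}
    (hb : R.IsMinimalDrop lam b) : R.Covers lam (lam - R.ncomb b) := by
  obtain ⟨hb0, hbd, hmin⟩ := hb
  refine ⟨hdom, hbd, ⟨b, by simp [ncomb, comb]⟩, ?_, ?_⟩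
  · simpa [ncomb_eq_zero_iff] using hb0
  · rintro η hη ⟨c, hc⟩ ⟨d, hd⟩
    replace hc : η - (lam - R.ncomb b) = R.ncomb c := hc
    replace hd : lam - η = R.ncomb d := hd
    have hη' : η = lam - R.ncomb d := by rw [← hd]; abel
    by_cases hd0 : d = 0
    · right
      rw [hη', (R.ncomb_eq_zero_iff d).2 hd0, sub_zero]
    · left
      have hle := hmin d hd0 (hη' ▸ hη)
      have hbcd : b = c + d := by
        apply R.ncomb_injective
        rw [ncomb_add, ← hc, ← hd]
        abel
      subst hbcd
      have hc0 : c = 0 := by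
        simp only [Pi.add_apply, Finset.sum_add_distrib] at hle
        have : ∑ i, c i = 0 := by omega
        funext i
        exact Finset.sum_eq_zero_iff.1 this i (Finset.mem_univ i)
      rw [hη', hc0, zero_add]

variable {R} in
theorem IsMinimalDrop.eq_of_le {lam : E} (hdom : R.IsDominant lam) {b : Fin ℓ → ℕ}
    (hb : R.IsMinimalDrop lam b) {c : Fin ℓ → ℕ} (hcb : c ≤ b) (hc0 : c ≠ 0)
    (hc : ∀ j, 0 ≤ ⟪lam - R.ncomb b + R.ncomb c, R.simple j⟫) : c = b := by
  obtain ⟨d, rfl⟩ := exists_add_of_le hcb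
  by_contra hne
  have hd0 : d ≠ 0 := by
    rintro rfl
    exact hne (add_zero c).symm
  have hd : R.IsDominant (lam - R.ncomb d) := by
    refine (R.isDominant_iff _).2 ⟨?_, fun j => ?_⟩
    · rw [sub_eq_add_neg]
      exact R.isIntegral_add hdom.1 (R.isIntegral_neg (R.isIntegral_ncomb d))
    · convert hc j using 2
      rw [ncomb_add]
      abel
  have hle := hb.2.2 d hd0 hd
  simp only [Pi.add_apply, Finset.sum_add_distrib] at hle
  refine hc0 (funext fun i => ?_)
  exact Finset.sum_eq_zero_iff.1 (by omega : ∑ i, c i = 0) i (Finset.mem_univ i)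

theorem ncomb_ne_neg_simple (c : Fin ℓ → ℕ) (i : Fin ℓ) : R.ncomb c ≠ -R.simple i := by
  intro h
  have h0 : R.ncomb (c + Pi.single i 1) = 0 := by
    rw [ncomb_add, ncomb_single, h, neg_add_cancel]
  have := congrFun ((R.ncomb_eq_zero_iff _).1 h0) i
  simp at this

theorem ncomb_add_single_mem {c : Fin ℓ → ℕ} (hc : R.ncomb c ∈ R.roots) {j : Fin ℓ}
    (hle : ⟪R.ncomb c, R.ncomb c⟫ ≤ ⟪R.simple j, R.simple j⟫)
    (hneg : ⟪R.ncomb c, R.simple j⟫ < 0) :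
    R.ncomb (c + Pi.single j 1) ∈ R.roots ∧
      ⟪R.ncomb (c + Pi.single j 1), R.ncomb (c + Pi.single j 1)⟫ =
        ⟪R.ncomb c, R.ncomb c⟫ := by
  have h := cpair_eq_neg_one (R.simple_mem j) hc hle (R.ncomb_ne_neg_simple c j) hneg
  have e : R.ncomb (c + Pi.single j 1) = wrefl (R.simple j) (R.ncomb c) := by
    rw [ncomb_add, ncomb_single, wrefl, h, neg_one_smul, sub_neg_eq_add]
  rw [e]
  exact ⟨R.reflect_mem _ (R.simple_mem j) _ hc, inner_wrefl_self (R.simple_mem j) _⟩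

theorem exists_maximal_root_le {b : Fin ℓ → ℕ} {k : Fin ℓ} (hk : 0 < b k)
    (hshort : ∀ j, 0 < b j → ⟪R.simple k, R.simple k⟫ ≤ ⟪R.simple j, R.simple j⟫)
    (J : Set (Fin ℓ)) :
    ∃ c ≤ b, 0 < c k ∧ R.ncomb c ∈ R.roots ∧
      ⟪R.ncomb c, R.ncomb c⟫ = ⟪R.simple k, R.simple k⟫ ∧
      (∀ j, j ∉ J → c j = (Pi.single k 1 : Fin ℓ → ℕ) j) ∧
      ∀ j ∈ J, c j < b j → 0 ≤ ⟪R.ncomb c, R.simple j⟫ := by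
  classical
  let T := (Finset.Icc 0 b).filter fun c => 0 < c k ∧ R.ncomb c ∈ R.roots ∧
      ⟪R.ncomb c, R.ncomb c⟫ = ⟪R.simple k, R.simple k⟫ ∧
      ∀ j, j ∉ J → c j = (Pi.single k 1 : Fin ℓ → ℕ) j
  have hT : T.Nonempty := by
    refine ⟨Pi.single k 1, ?_⟩
    simp only [T, Finset.mem_filter, Finset.mem_Icc, ncomb_single]
    refine ⟨⟨fun _ => Nat.zero_le _, fun j => ?_⟩, by simp, R.simple_mem k, by simp⟩
    by_cases h : j = k
    · subst h; simpa using Nat.succ_le_of_lt hk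
    · simp [h]
  obtain ⟨c, hcT, hmax⟩ := T.exists_max_image (fun c => ∑ i, c i) hT
  simp only [T, Finset.mem_filter, Finset.mem_Icc] at hcT hmax
  obtain ⟨⟨-, hcb⟩, hck, hcR, hcN, hcJ⟩ := hcT
  refine ⟨c, hcb, hck, hcR, hcN, hcJ, fun j hj hlt => ?_⟩
  by_contra! hneg
  obtain ⟨hm, hn⟩ := R.ncomb_add_single_mem hcR
    (hcN.trans_le (hshort j (by omega))) hneg
  have := hmax (c + Pi.single j 1) ⟨⟨fun _ => Nat.zero_le _, fun i => ?_⟩, by simp; omega, hm, hn.trans hcN,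
    fun i hi => ?_⟩
  · simp [Finset.sum_add_distrib] at this
  · by_cases h : i = j
    · subst h; simpa using hlt
    · simpa [h] using hcb i
  · have h : i ≠ j := fun h => hi (h ▸ hj)
    simpa [h] using hcJ i hi

variable {R} in
theorem IsMinimalDrop.isRoot {lam : E} (hdom : R.IsDominant lam) {b : Fin ℓ → ℕ}
    (hb : R.IsMinimalDrop lam b) {k : Fin ℓ} (hk : 0 < b k)
    (hshort : ∀ j, 0 < b j → ⟪R.simple k, R.simple k⟫ ≤ ⟪R.simple j, R.simple j⟫) :
    R.ncomb b ∈ R.roots ∧ ⟪R.ncomb b, R.ncomb b⟫ = ⟪R.simple k, R.simple k⟫ ∧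
      ∀ j, ⟪lam - R.ncomb b, R.simple j⟫ ≠ 0 → b j = (Pi.single k 1 : Fin ℓ → ℕ) j := by
  obtain ⟨c, hcb, hck, hcR, hcN, hcJ, hcpos⟩ := R.exists_maximal_root_le hk hshort
    {j | ⟪lam - R.ncomb b, R.simple j⟫ = 0}
  have hlam := ((R.isDominant_iff _).1 hdom).2
  have hmu := (R.isDominant_iff _).1 hb.2.1
  have hcb' : c = b := by
    refine hb.eq_of_le hdom hcb (by rintro rfl; simp at hck) fun j => ?_
    have hm := hmu.2 j
    rw [inner_add_left]
    by_cases hpos : 0 ≤ ⟪R.ncomb c, R.simple j⟫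
    · exact add_nonneg hm hpos
    push Not at hpos
    rcases (hcb j).eq_or_lt with hj | hj
    · obtain ⟨d, rfl⟩ := exists_add_of_le hcb
      have hd := R.inner_ncomb_nonpos (c := d) (j := j) (by simpa using hj)
      have := hlam j
      rw [ncomb_add, inner_sub_left, inner_add_left]
      linarith
    by_cases h0 : ⟪lam - R.ncomb b, R.simple j⟫ = 0
    · exact add_nonneg hm (hcpos j h0 hj)
    · obtain ⟨n, hn⟩ := hmu.1 _ (R.simple_mem j)
      have h1 := cpair_mul_inner_self (R.simple_mem j) (lam - R.ncomb b)
      have h2 := cpair_mul_inner_self (R.simple_mem j) (R.ncomb c)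
      rw [cpair_eq_neg_one (R.simple_mem j) hcR
        (hcN.trans_le (hshort j (Nat.zero_lt_of_lt hj))) (R.ncomb_ne_neg_simple c j) hpos] at h2
      have hN := inner_self_pos (R.simple_mem j)
      have hm' := lt_of_le_of_ne hm (Ne.symm h0)
      rw [hn] at h1
      have hn1 : (1 : ℝ) ≤ n := by
        have : 0 < n := by
          by_contra! h
          have : (n : ℝ) ≤ 0 := by exact_mod_cast h
          nlinarith
        exact_mod_cast this
      nlinarith
  subst hcb'
  exact ⟨hcR, hcN, hcJ⟩

/-- The support of a family of coefficients. -/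
def support (b : Fin ℓ → ℕ) : Finset (Fin ℓ) := Finset.univ.filter fun i => 0 < b i

theorem mem_support {b : Fin ℓ → ℕ} {i : Fin ℓ} : i ∈ support b ↔ 0 < b i := by
  simp [support]

variable {R} in
theorem IsMinimalDrop.connected {lam : E} (hdom : R.IsDominant lam) {b : Fin ℓ → ℕ}
    (hb : R.IsMinimalDrop lam b) : R.Connected (support b) := by
  have hlam := ((R.isDominant_iff _).1 hdom).2
  have hmu := ((R.isDominant_iff _).1 hb.2.1).2
  constructor
  · obtain ⟨i, hi⟩ := Function.ne_iff.1 hb.1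
    exact ⟨i, mem_support.2 (Nat.pos_of_ne_zero hi)⟩
  intro S hS hne horth
  let c : Fin ℓ → ℕ := fun i => if i ∈ S then b i else 0
  let d : Fin ℓ → ℕ := fun i => if i ∈ S then 0 else b i
  have hcd : b = c + d := by
    funext i
    by_cases h : i ∈ S <;> simp [c, d, h]
  have hcb : c ≤ b := fun i => by
    by_cases h : i ∈ S <;> simp [c, h]
  have hc0 : c ≠ 0 := by
    obtain ⟨i, hi⟩ := hne
    refine Function.ne_iff.2 ⟨i, ?_⟩
    have := mem_support.1 (hS hi)
    simp only [c, hi, if_true, Pi.zero_apply]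
    omega
  have hcb' : c = b := by
    refine hb.eq_of_le hdom hcb hc0 fun j => ?_
    have hsum : R.ncomb b = R.ncomb c + R.ncomb d := by rw [← ncomb_add, ← hcd]
    have hd : j ∈ S ∨ j ∉ support b → ⟪R.ncomb d, R.simple j⟫ ≤ 0 := by
      rintro (hj | hj)
      · exact R.inner_ncomb_nonpos (by simp [d, hj])
      · refine R.inner_ncomb_nonpos ?_
        have : b j = 0 := by simpa [mem_support] using hj
        simp [d, this]
    by_cases hj : j ∈ S ∨ j ∉ support b
    · have h1 := hd hj
      have h2 := hlam j
      rw [hsum, inner_add_left, inner_sub_left, inner_add_left]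
      linarith
    · push Not at hj
      have h1 : ⟪R.ncomb c, R.simple j⟫ = 0 := by
        rw [inner_ncomb_left]
        refine Finset.sum_eq_zero fun i _ => ?_
        by_cases hi : i ∈ S
        · rw [horth i hi j hj.2 hj.1, mul_zero]
        · simp [c, hi]
      rw [inner_add_left, h1, add_zero]
      exact hmu j
  refine hS.antisymm fun i hi => ?_
  by_contra hiS
  have h := congrFun hcb' i
  have := mem_support.1 hi
  simp only [c, hiS, if_false] at h
  omega

theorem exists_inner_simple_pos {c : Fin ℓ → ℕ} (hc : R.ncomb c ∈ R.roots) :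
    ∃ j, 0 < c j ∧ 0 < ⟪R.ncomb c, R.simple j⟫ := by
  have h := inner_self_pos hc
  rw [inner_ncomb_left] at h
  obtain ⟨j, -, hj⟩ := Finset.exists_lt_of_sum_lt (f := fun _ => (0 : ℝ)) (by simpa using h)
  rw [real_inner_comm] at hj
  have hcj : c j ≠ 0 := by
    intro h0
    simp [h0] at hj
  exact ⟨j, Nat.pos_of_ne_zero hcj, pos_of_mul_pos_right hj (Nat.cast_nonneg _)⟩

theorem exists_simple_inner_self_eq {c : Fin ℓ → ℕ} (hc : R.ncomb c ∈ R.roots) :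
    ∃ j, 0 < c j ∧ ⟪R.ncomb c, R.ncomb c⟫ = ⟪R.simple j, R.simple j⟫ := by
  induction hs : ∑ m, c m using Nat.strong_induction_on generalizing c with
  | _ n ih =>
  subst hs
  obtain ⟨i, hci, hi⟩ := R.exists_inner_simple_pos hc
  by_cases hne : R.ncomb c = R.simple i
  · exact ⟨i, hci, by rw [hne]⟩
  have hp : 0 < cpair (R.ncomb c) (R.simple i) :=
    div_pos (by linarith) (inner_self_pos (R.simple_mem i))
  have hm := R.reflect_mem _ (R.simple_mem i) _ hc
  obtain ⟨d, hd, hdc, hlt⟩ := R.exists_ncomb_sub_smul hc hne hp hm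
  have hn := inner_wrefl_self (R.simple_mem i) (R.ncomb c)
  rw [wrefl, ← hd] at hm hn
  obtain ⟨j, hj, e⟩ := ih _ hlt hm rfl
  exact ⟨j, hj.trans_le (hdc j), hn ▸ e⟩

theorem le_of_isDominantOn {b c : Fin ℓ → ℕ} (hb : R.ncomb b ∈ R.roots)
    (hc : R.ncomb c ∈ R.roots) (hcb : ∀ j, 0 < c j → 0 < b j)
    (hnorm : ⟪R.ncomb c, R.ncomb c⟫ = ⟪R.ncomb b, R.ncomb b⟫)
    (hbd : ∀ j, 0 < b j → 0 ≤ ⟪R.ncomb b, R.simple j⟫)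
    (hcd : ∀ j, 0 < b j → 0 ≤ ⟪R.ncomb c, R.simple j⟫) : c ≤ b := by
  by_cases hne : R.ncomb c = R.ncomb b
  · exact (R.ncomb_injective hne).le
  have hpos : 0 < ⟪R.ncomb c, R.ncomb b⟫ := by
    obtain ⟨j, hcj, hj⟩ := R.exists_inner_simple_pos hc
    rw [real_inner_comm, inner_ncomb_left]
    refine Finset.sum_pos' (fun i _ => ?_) ⟨j, Finset.mem_univ j, ?_⟩
    · rw [real_inner_comm]
      rcases Nat.eq_zero_or_pos (b i) with h | h
      · simp [h]
      · exact mul_nonneg (Nat.cast_nonneg _) (hcd i h)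
    · rw [real_inner_comm]
      exact mul_pos (by exact_mod_cast hcb j hcj) hj
  have h1 := cpair_eq_one hb hc hnorm.le hne hpos
  have h2 := cpair_mul_inner_self hb (R.ncomb c)
  have hm := R.reflect_mem _ hb _ hc
  rw [wrefl, h1, one_smul] at hm
  rw [h1] at h2
  obtain ⟨d, hd | hd⟩ := R.exists_eq_ncomb_or_neg hm
  · exfalso
    have e : R.ncomb c = R.ncomb (b + d) := by
      rw [ncomb_add, ← hd]
      abel
    have e' := R.ncomb_injective e
    have hdb : 0 ≤ ⟪R.ncomb d, R.ncomb b⟫ := by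
      rw [inner_ncomb_left]
      refine Finset.sum_nonneg fun i _ => ?_
      rw [real_inner_comm]
      rcases Nat.eq_zero_or_pos (d i) with h | h
      · simp [h]
      · refine mul_nonneg (Nat.cast_nonneg _) (hbd i (hcb i ?_))
        rw [e', Pi.add_apply]
        omega
    rw [e, ncomb_add, inner_add_left] at h2
    have := inner_self_pos hb
    linarith
  · have e : b = c + d := by
      apply R.ncomb_injective
      rw [ncomb_add, ← neg_eq_iff_eq_neg.2 hd]
      abel
    rw [e]
    exact le_self_add

theorem le_of_isDominantOn_left {b c : Fin ℓ → ℕ} (hb : R.ncomb b ∈ R.roots)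
    (hshort : ∀ j, 0 < b j → ⟪R.ncomb b, R.ncomb b⟫ ≤ ⟪R.simple j, R.simple j⟫)
    (hbd : ∀ j, 0 < b j → 0 ≤ ⟪R.ncomb b, R.simple j⟫)
    (hc : R.ncomb c ∈ R.roots) (hcb : ∀ j, 0 < c j → 0 < b j)
    (hnorm : ⟪R.ncomb c, R.ncomb c⟫ = ⟪R.ncomb b, R.ncomb b⟫) : c ≤ b := by
  classical
  by_contra hle
  let T := (R.roots.preimage R.ncomb R.ncomb_injective.injOn).filter fun c =>
    (∀ j, 0 < c j → 0 < b j) ∧ ⟪R.ncomb c, R.ncomb c⟫ = ⟪R.ncomb b, R.ncomb b⟫ ∧ ¬ c ≤ b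
  have hT : T.Nonempty := ⟨c, by simp only [T, Finset.mem_filter, Finset.mem_preimage]; exact ⟨hc, hcb, hnorm, hle⟩⟩
  obtain ⟨g, hgT, hmax⟩ := T.exists_max_image (fun c => ∑ i, c i) hT
  simp only [T, Finset.mem_filter, Finset.mem_preimage] at hgT hmax
  obtain ⟨hg, hgb, hgN, hgle⟩ := hgT
  refine hgle (R.le_of_isDominantOn hb hg hgb hgN hbd fun j hj => ?_)
  by_contra! hneg
  obtain ⟨hm, hn⟩ := R.ncomb_add_single_mem hg (hgN.trans_le (hshort j hj)) hneg
  have := hmax (g + Pi.single j 1) ⟨hm, fun i hi => ?_, hn.trans hgN,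
    fun h => hgle (le_self_add.trans h)⟩
  · simp [Finset.sum_add_distrib] at this
  · by_cases h : i = j
    · rwa [h]
    · exact hgb i (by simpa [h] using hi)

variable {R} in
theorem IsRootOf.exists_ncomb {I : Finset (Fin ℓ)} {γ : E} (h : R.IsRootOf I γ) :
    ∃ c : Fin ℓ → ℕ, R.ncomb c ∈ R.roots ∧ (∀ i, 0 < c i → i ∈ I) ∧
      (γ = R.ncomb c ∨ γ = -R.ncomb c) := by
  obtain ⟨hγ, x, hx, e⟩ := h
  replace e : γ = R.comb fun i => (x i : ℝ) := e
  obtain ⟨c, hc⟩ := R.exists_eq_ncomb_or_neg hγ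
  refine ⟨c, ?_, fun i hi => hx i fun h0 => ?_, hc⟩
  · rcases hc with hc | hc
    · exact hc ▸ hγ
    · rw [← neg_eq_iff_eq_neg] at hc
      exact hc ▸ neg_mem hγ
  · rcases hc with hc | hc
    · have := congrFun (R.comb_injective (hc.symm.trans e)) i
      simp only [h0, Int.cast_zero, Nat.cast_eq_zero] at this
      omega
    · rw [ncomb, ← comb_neg] at hc
      have := congrFun (R.comb_injective (hc.symm.trans e)) i
      simp only [h0, Int.cast_zero, Pi.neg_apply, neg_eq_zero, Nat.cast_eq_zero] at this
      omega

theorem isHighestShortRoot_ncomb {b : Fin ℓ → ℕ} (hb : R.ncomb b ∈ R.roots)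
    (hshort : ∀ j, 0 < b j → ⟪R.ncomb b, R.ncomb b⟫ ≤ ⟪R.simple j, R.simple j⟫)
    (hbd : ∀ j, 0 < b j → 0 ≤ ⟪R.ncomb b, R.simple j⟫) :
    R.IsHighestShortRoot (support b) (R.ncomb b) := by
  have hroot : R.IsRootOf (support b) (R.ncomb b) := by
    refine ⟨hb, fun i => (b i : ℤ), fun i hi => mem_support.2 ?_, by simp [ncomb, comb]⟩
    exact Nat.pos_of_ne_zero fun h0 => hi (by simp [h0])
  have hmin : ∀ γ, R.IsRootOf (support b) γ → ⟪R.ncomb b, R.ncomb b⟫ ≤ ⟪γ, γ⟫ := by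
    intro γ hγ
    obtain ⟨c, hc, hcb, e⟩ := hγ.exists_ncomb
    obtain ⟨j, hj, hN⟩ := R.exists_simple_inner_self_eq hc
    have h := hshort j (mem_support.1 (hcb j hj))
    rcases e with rfl | rfl
    · rwa [hN]
    · rwa [inner_neg_neg, hN]
  refine ⟨⟨hroot, hmin⟩, fun γ hγ => ?_⟩
  have hN := le_antisymm (hγ.2 _ hroot) (hmin γ hγ.1)
  obtain ⟨c, hc, hcb, rfl | rfl⟩ := hγ.1.exists_ncomb
  · have hle := R.le_of_isDominantOn_left hb hshort hbd hc
      (fun j hj => mem_support.1 (hcb j hj)) hN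
    obtain ⟨d, rfl⟩ := exists_add_of_le hle
    exact (R.wle_iff _ _).2 ⟨d, by rw [ncomb_add, add_sub_cancel_left]⟩
  · exact (R.wle_iff _ _).2 ⟨b + c, by rw [ncomb_add, sub_neg_eq_add]⟩

theorem two_mul_inner_simple_le {i j : Fin ℓ} (hij : i ≠ j)
    (h : ⟪R.simple i, R.simple j⟫ ≠ 0) :
    2 * ⟪R.simple i, R.simple j⟫ ≤ -⟪R.simple j, R.simple j⟫ := by
  have hneg := lt_of_le_of_ne (R.inner_simple_nonpos hij) h
  obtain ⟨n, hn⟩ := R.cpair_int _ (R.simple_mem j) _ (R.simple_mem i)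
  have hm := cpair_mul_inner_self (R.simple_mem j) (R.simple i)
  have hN := inner_self_pos (R.simple_mem j)
  rw [hn] at hm
  have hn1 : n ≤ -1 := by
    by_contra! h0
    have : (0 : ℝ) ≤ n := by exact_mod_cast (by omega : 0 ≤ n)
    nlinarith
  have : (n : ℝ) ≤ -1 := by exact_mod_cast hn1
  nlinarith

theorem ternary_form_pos {j k m : Fin ℓ} (hmj : m ≠ j) (hmk : m ≠ k) (s t : ℝ) :
    0 < ⟪R.simple m, R.simple m⟫ + s ^ 2 * ⟪R.simple k, R.simple k⟫ +
      t ^ 2 * ⟪R.simple j, R.simple j⟫ + 2 * s * ⟪R.simple m, R.simple k⟫ +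
      2 * t * ⟪R.simple m, R.simple j⟫ + 2 * s * t * ⟪R.simple j, R.simple k⟫ := by
  have h : R.comb (Pi.single m 1 + Pi.single k s + Pi.single j t) ≠ 0 := by
    intro h0
    have hz : R.comb 0 = 0 := by simp [comb]
    have := congrFun (R.comb_injective (h0.trans hz.symm)) m
    simp [hmj, hmk] at this
  have h1 := real_inner_self_pos.2 h
  simp only [comb_add, comb_single, one_smul, inner_add_left, inner_add_right,
    real_inner_smul_left, real_inner_smul_right] at h1
  rw [real_inner_comm (R.simple m) (R.simple k), real_inner_comm (R.simple m) (R.simple j),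
    real_inner_comm (R.simple j) (R.simple k)] at h1
  linarith

theorem pair_eq_univ_of_cpair_eq_neg_three {j k : Fin ℓ} (hjk : j ≠ k)
    (h : cpair (R.simple j) (R.simple k) = -3) : ({j, k} : Finset (Fin ℓ)) = Finset.univ := by
  have hjk2 := cpair_mul_inner_self (R.simple_mem k) (R.simple j)
  rw [h] at hjk2
  have hNk := inner_self_pos (R.simple_mem k)
  have hNj := inner_self_pos (R.simple_mem j)
  have hN : ⟪R.simple j, R.simple j⟫ = 3 * ⟪R.simple k, R.simple k⟫ := by
    obtain ⟨q, hq⟩ := R.cpair_int _ (R.simple_mem j) _ (R.simple_mem k)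
    have hqm := cpair_mul_inner_self (R.simple_mem j) (R.simple k)
    rw [hq, real_inner_comm (R.simple j) (R.simple k)] at hqm
    have hpos : 0 < ⟪(2 : ℝ) • R.simple j + (3 : ℝ) • R.simple k,
        (2 : ℝ) • R.simple j + (3 : ℝ) • R.simple k⟫ := by
      refine real_inner_self_pos.2 fun h0 => ?_
      rw [← comb_single, ← comb_single, ← comb_add] at h0
      have hz : R.comb 0 = 0 := by simp [comb]
      have := congrFun (R.comb_injective (h0.trans hz.symm)) j
      simp [hjk] at this
    simp only [inner_add_left, inner_add_right, real_inner_smul_left,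
      real_inner_smul_right] at hpos
    rw [real_inner_comm (R.simple j) (R.simple k)] at hpos
    have h1 : q < 0 := by
      by_contra! h0
      have : (0 : ℝ) ≤ q := by exact_mod_cast h0
      nlinarith
    have h2 : -2 < q := by
      by_contra! h0
      have : (q : ℝ) ≤ -2 := by exact_mod_cast h0
      nlinarith
    have h3 : q = -1 := by omega
    rw [h3] at hqm
    push_cast at hqm
    linarith
  refine R.irred _ ⟨j, by simp⟩ fun i hi m hm => ?_
  simp only [Finset.mem_insert, Finset.mem_singleton, not_or] at hi hm
  obtain ⟨hmj, hmk⟩ := hm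
  by_contra hne
  rcases hi with rfl | rfl
  · have h1 := R.two_mul_inner_simple_le (Ne.symm hmj) hne
    rw [real_inner_comm] at hne h1
    have h2 := R.two_mul_inner_simple_le hmj hne
    have h3 := R.inner_simple_nonpos hmk
    have h4 := R.ternary_form_pos hmj hmk 3 2
    linarith
  · have h1 := R.two_mul_inner_simple_le (Ne.symm hmk) hne
    rw [real_inner_comm] at hne h1
    have h2 := R.two_mul_inner_simple_le hmk hne
    have h3 := R.inner_simple_nonpos hmj
    have h4 := R.ternary_form_pos hmj hmk 2 1
    linarith

/-- If a root with coefficient one at its unique shortest simple root `α k` is not dominant at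
`α k`, then the root system has rank two and the root is the sum of the simple roots. -/
theorem rank_two_of_inner_neg {b : Fin ℓ → ℕ} (hb : R.ncomb b ∈ R.roots) {k : Fin ℓ}
    (hbk : b k = 1) (hnorm : ⟪R.ncomb b, R.ncomb b⟫ = ⟪R.simple k, R.simple k⟫)
    (hlong : ∀ j, j ≠ k → 0 < b j → ⟪R.simple k, R.simple k⟫ < ⟪R.simple j, R.simple j⟫)
    (hneg : ⟪R.ncomb b, R.simple k⟫ < 0) :
    ℓ = 2 ∧ R.ncomb b = ∑ i, R.simple i := by
  choose n hn using fun j => R.cpair_int _ (R.simple_mem k) _ (R.simple_mem j)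
  have hnm : ∀ j, n j * ⟪R.simple k, R.simple k⟫ = 2 * ⟪R.simple j, R.simple k⟫ := fun j =>
    hn j ▸ cpair_mul_inner_self (R.simple_mem k) (R.simple j)
  have hNk := inner_self_pos (R.simple_mem k)
  have hnk : n k = 2 := by
    have : (n k : ℝ) = 2 := mul_right_cancel₀ hNk.ne' (hnm k)
    exact_mod_cast this
  have hsum : ∑ j, (b j : ℤ) * n j = -1 := by
    have h1 := cpair_mul_inner_self (R.simple_mem k) (R.ncomb b)
    rw [cpair_eq_neg_one (R.simple_mem k) hb hnorm.le (R.ncomb_ne_neg_simple b k) hneg,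
      inner_ncomb_left, Finset.mul_sum] at h1
    have h2 : ((∑ j, (b j : ℤ) * n j : ℤ) : ℝ) * ⟪R.simple k, R.simple k⟫ =
        (-1 : ℝ) * ⟪R.simple k, R.simple k⟫ := by
      rw [h1]
      push_cast
      rw [Finset.sum_mul]
      exact Finset.sum_congr rfl fun j _ => by linear_combination (b j : ℝ) * hnm j
    exact_mod_cast mul_right_cancel₀ hNk.ne' h2
  rw [← Finset.add_sum_erase _ _ (Finset.mem_univ k), hnk, hbk] at hsum
  have hterm : ∀ j ∈ Finset.univ.erase k, (b j : ℤ) * n j = 0 ∨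
      (b j : ℤ) * n j ≤ -2 ∧ (n j ≤ -2 ∧ 0 < b j) := by
    intro j hj
    have hjk := Finset.ne_of_mem_erase hj
    rcases Nat.eq_zero_or_pos (b j) with h0 | h0
    · simp [h0]
    by_cases h : ⟪R.simple j, R.simple k⟫ = 0
    · left
      have h1 := hnm j
      rw [h, mul_zero, mul_eq_zero] at h1
      have h2 : n j = 0 := by exact_mod_cast h1.resolve_right hNk.ne'
      simp [h2]
    · right
      rw [real_inner_comm] at h
      have h1 := R.two_mul_inner_simple_le hjk.symm h
      rw [real_inner_comm] at h1
      have h2 : n j < -1 := by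
        have : (n j : ℝ) < -1 := by
          have := hlong j hjk h0
          by_contra! h3
          have h4 := hnm j
          nlinarith
        exact_mod_cast this
      have h0' : (1 : ℤ) ≤ b j := by exact_mod_cast h0
      exact ⟨by nlinarith, by omega, h0⟩
  have hnonpos : ∀ j ∈ Finset.univ.erase k, (b j : ℤ) * n j ≤ 0 := fun j hj => by
    rcases hterm j hj with h | h <;> omega
  obtain ⟨j, hj, hj0⟩ := Finset.exists_ne_zero_of_sum_ne_zero
    (s := Finset.univ.erase k) (f := fun j => (b j : ℤ) * n j) (by omega)
  obtain ⟨hj1, hj2, hj3⟩ := (hterm j hj).resolve_left hj0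
  rw [← Finset.add_sum_erase _ _ hj] at hsum
  have hj4 : (b j : ℤ) * n j = -3 := by
    by_contra hne
    have hle : ∑ i ∈ (Finset.univ.erase k).erase j, (b i : ℤ) * n i ≤ 0 :=
      Finset.sum_nonpos fun i hi => hnonpos i (Finset.mem_of_mem_erase hi)
    obtain ⟨i, hi, hi0⟩ := Finset.exists_ne_zero_of_sum_ne_zero
      (s := (Finset.univ.erase k).erase j) (f := fun j => (b j : ℤ) * n j) (by omega)
    have hi1 := ((hterm i (Finset.mem_of_mem_erase hi)).resolve_left hi0).1
    have hle' : ∑ i ∈ ((Finset.univ.erase k).erase j).erase i, (b i : ℤ) * n i ≤ 0 :=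
      Finset.sum_nonpos fun i hi =>
        hnonpos i (Finset.mem_of_mem_erase (Finset.mem_of_mem_erase hi))
    rw [← Finset.add_sum_erase _ _ hi] at hsum
    omega
  have hbj : b j = 1 := by
    by_contra hne
    have h2 : (2 : ℤ) ≤ b j := by exact_mod_cast (by omega : 2 ≤ b j)
    nlinarith
  have hnj : cpair (R.simple j) (R.simple k) = -3 := by
    rw [hbj] at hj4
    have : n j = -3 := by simpa using hj4
    rw [hn, this]
    norm_num
  have hjk := Finset.ne_of_mem_erase hj
  have huniv := R.pair_eq_univ_of_cpair_eq_neg_three hjk hnj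
  constructor
  · have := congrArg Finset.card huniv
    rw [Finset.card_pair hjk] at this
    simpa using this.symm
  · rw [ncomb, comb, ← huniv, Finset.sum_pair hjk, Finset.sum_pair hjk, hbj, hbk]
    simp

variable {R} in
theorem IsMinimalDrop.isHighestShortRoot_or {lam : E} (hdom : R.IsDominant lam) {b : Fin ℓ → ℕ}
    (hb : R.IsMinimalDrop lam b) : R.IsHighestShortRoot (support b) (R.ncomb b) ∨
      (ℓ = 2 ∧ R.ncomb b = ∑ i, R.simple i) := by
  obtain ⟨k, hk, hshort⟩ := (support b).exists_min_image
    (fun j => ⟪R.simple j, R.simple j⟫) (hb.connected hdom).1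
  simp only [mem_support] at hk hshort
  obtain ⟨hroot, hnorm, hsupp⟩ := hb.isRoot hdom hk hshort
  by_cases hbd : ∀ j, 0 < b j → 0 ≤ ⟪R.ncomb b, R.simple j⟫
  · exact .inl (R.isHighestShortRoot_ncomb hroot
      (fun j hj => hnorm.trans_le (hshort j hj)) hbd)
  right
  push Not at hbd
  obtain ⟨i, hi, hneg⟩ := hbd
  have hmu : ⟪lam - R.ncomb b, R.simple i⟫ ≠ 0 := by
    have := ((R.isDominant_iff _).1 hdom).2 i
    rw [inner_sub_left]
    linarith
  obtain rfl : i = k := by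
    by_contra h
    have := hsupp i hmu
    simp only [ne_eq, h, not_false_eq_true, Pi.single_eq_of_ne] at this
    omega
  refine R.rank_two_of_inner_neg hroot (by simpa using hsupp i hmu) hnorm
    (fun j hji hj => ?_) hneg
  by_contra! hle
  have := (hb.isRoot hdom hj fun m hm => hle.trans (hshort m hm)).2.2 i hmu
  simp only [ne_eq, hji.symm, not_false_eq_true, Pi.single_eq_of_ne] at this
  omega

end RootSystemData

variable {ℓ : ℕ}

/-- If `λ` is a nonzero dominant weight which is not minuscule, then there is an
irreducible subset `I` with `λ - θ_I` dominant (in G₂ one may also use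
`α₁ + α₂`); consequently `λ` covers some dominant weight. -/
theorem statement18 (R : RootSystemData ℓ E) (lam : E)
    (hdom : R.IsDominant lam) (hne : lam ≠ 0) (hnm : ¬ R.IsMinuscule lam) :
    (∃ (I : Finset (Fin ℓ)) (θ : E), R.Connected I ∧
      (R.IsHighestShortRoot I θ ∨ (ℓ = 2 ∧ θ = ∑ i, R.simple i)) ∧
      R.IsDominant (lam - θ)) ∧
    ∃ μ : E, R.IsDominant μ ∧ R.Covers lam μ := by
  obtain ⟨b, hb⟩ := R.exists_isMinimalDrop (R.exists_isDominant_lt hdom hne hnm)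
  exact ⟨⟨RootSystemData.support b, R.ncomb b, hb.connected hdom,
    hb.isHighestShortRoot_or hdom, hb.2.1⟩, lam - R.ncomb b, hb.2.1, hb.covers hdom⟩
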